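/- Let (S,T) be a finite directed graph that is strongly connected (for all s, s' ∈ S there is a finite run from s to s'), let c : S → ℝ be vertex costs with c(s) ≥ 0 for all s, and let M ⊆ S be a nonempty set of surveillance states. For u, u' ∈ M define D(u, u') ∈ [0,∞] as the infimum over all finite runs u = v₀, v₁, …, v_{n+1} = u' (n ≥ 0) with v₁, …, v_n ∉ M of Σ_{j=0}^{n} c(v_j). Then the minimum over all cycles of (S,T) visiting M of the per-surveillance-cycle ratio equals the minimum over all m ≥ 0 and all sequences u₀, …, u_m ∈ M with D(u_i, u_{(i+1) mod (m+1)}) < ∞ for all i of (1/(m+1)) Σ_{i=0}^{m} D(u_i, u_{(i+1) mod (m+1)}). -/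

import Mathlib

open ENNReal

/-- A cycle `c₀, …, c_m` of the graph `(S, T)`. -/
def IsCycle {S : Type*} (T : S → S → Prop) (m : ℕ) (c : ℕ → S) : Prop :=
  (∀ i < m, T (c i) (c (i + 1))) ∧ T (c m) (c 0)

/-- The per-surveillance-cycle ratio of the cycle `σ₀, …, σ_m`. -/
noncomputable def psRatio {S : Type*} (c : S → ℝ) (M : Set S) (m : ℕ) (σ : ℕ → S) : ℝ :=
  (∑ i ∈ Finset.range (m + 1), c (σ i)) / ({i : ℕ | i ≤ m ∧ σ i ∈ M}.ncard : ℝ)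

/-- `D(u, u')`: infimum, over finite runs `u = v₀, …, v_{n+1} = u'` whose
intermediate states avoid `M`, of `Σ_{j=0}^{n} c(v_j)` (valued in `[0, ∞]`). -/
noncomputable def Dred {S : Type*} (T : S → S → Prop) (c : S → ℝ) (M : Set S)
    (u u' : S) : ℝ≥0∞ :=
  sInf {x : ℝ≥0∞ | ∃ (n : ℕ) (v : ℕ → S), v 0 = u ∧ v (n + 1) = u' ∧
    (∀ i < n + 1, T (v i) (v (i + 1))) ∧
    (∀ j, 1 ≤ j → j ≤ n → v j ∉ M) ∧
    x = ∑ j ∈ Finset.range (n + 1), ENNReal.ofReal (c (v j))}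

open Classical in
/-- Number of visits to `M` among the first `L` states. -/
noncomputable def visN {S : Type*} (M : Set S) (L : ℕ) (τ : ℕ → S) : ℕ :=
  ∑ i ∈ Finset.range L, if τ i ∈ M then 1 else 0

lemma visN_eq_ncard {S : Type*} (M : Set S) (m : ℕ) (τ : ℕ → S) :
    {i : ℕ | i ≤ m ∧ τ i ∈ M}.ncard = visN M (m + 1) τ := by
  classical
  have : {i : ℕ | i ≤ m ∧ τ i ∈ M} = ((Finset.range (m+1)).filter (fun i => τ i ∈ M) : Finset ℕ) := by
    ext i; simp
  rw [this, Set.ncard_coe_finset, visN, Finset.card_filter]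

lemma sum_rot {α : Type*} [AddCommMonoid α] (g : ℕ → α) (N : ℕ) (hg : ∀ i, g (i + N) = g i)
    (a : ℕ) : ∑ j ∈ Finset.range N, g (a + j) = ∑ j ∈ Finset.range N, g j := by
  induction a with
  | zero => simp
  | succ a ih =>
    rw [← ih]
    cases N with
    | zero => simp
    | succ N =>
      rw [Finset.sum_range_succ, Finset.sum_range_succ' (fun j => g (a + j))]
      congr 1
      · exact Finset.sum_congr rfl fun j _ => by congr 1; omega
      · rw [← hg (a + 0)]; congr 1; omega

lemma exists_u {S : Type*} (T : S → S → Prop) (c : S → ℝ) (M : Set S) (τ : ℕ → S)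
    (hT : ∀ i, T (τ i) (τ (i + 1))) (h0 : τ 0 ∈ M) (L : ℕ) (hL : τ L ∈ M) :
    ∃ u : ℕ → S, u 0 = τ 0 ∧ u (visN M L τ) = τ L ∧ (∀ i, u i ∈ M) ∧
      ∑ i ∈ Finset.range (visN M L τ), Dred T c M (u i) (u (i + 1)) ≤
        ∑ i ∈ Finset.range L, ENNReal.ofReal (c (τ i)) := by
  classical
  induction L using Nat.strong_induction_on with
  | _ L ih =>
    rcases Nat.eq_zero_or_pos L with rfl | hpos
    · exact ⟨fun _ => τ 0, by simp [visN, h0]⟩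
    obtain ⟨n, rfl⟩ : ∃ n, L = n + 1 := ⟨L - 1, by omega⟩
    set p := Nat.findGreatest (fun j => τ j ∈ M) n with hp
    have hpn : p ≤ n := Nat.findGreatest_le n
    have hpM : τ p ∈ M := Nat.findGreatest_spec (P := fun j => τ j ∈ M) (Nat.zero_le n) h0
    have hgt : ∀ j, p < j → j ≤ n → τ j ∉ M := fun j h1 h2 =>
      Nat.findGreatest_is_greatest (P := fun j => τ j ∈ M) h1 h2
    obtain ⟨d, hd⟩ : ∃ d, n = p + d := ⟨n - p, by omega⟩
    obtain ⟨u, hu0, huk, huM, hus⟩ := ih p (by omega) hpM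
    have hv : visN M (n + 1) τ = visN M p τ + 1 := by
      unfold visN
      rw [hd, add_assoc, Finset.sum_range_add, Finset.sum_range_succ']
      congr 1
      rw [Finset.sum_eq_zero]
      · simp [hpM]
      · intro j hj
        rw [if_neg]
        exact hgt _ (by omega) (by have := Finset.mem_range.1 hj; omega)
    rw [hv]
    refine ⟨fun i => if i ≤ visN M p τ then u i else τ (n + 1), by simp [hu0], by simp, ?_, ?_⟩
    · intro i; dsimp only; split_ifs
      · exact huM i
      · exact hL
    · rw [Finset.sum_range_succ, hd, add_assoc, Finset.sum_range_add]
      refine add_le_add (le_trans (le_of_eq ?_) hus) ?_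
      · refine Finset.sum_congr rfl fun i hi => ?_
        have := Finset.mem_range.1 hi
        beta_reduce
        rw [if_pos (by omega), if_pos (by omega)]
      · beta_reduce
        rw [if_pos le_rfl, if_neg (by omega), huk]
        refine sInf_le ⟨d, fun j => τ (p + j), rfl, rfl, fun i _ => hT _, ?_, rfl⟩
        intro j h1 h2
        exact hgt _ (by omega) (by omega)

lemma exists_walk {S : Type*} (T : S → S → Prop) (c : S → ℝ) (hc : ∀ s, 0 ≤ c s) (M : Set S)
    (u : ℕ → S) (hu : ∀ i, u i ∈ M) (hD : ∀ i, Dred T c M (u i) (u (i + 1)) ≠ ⊤)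
    (ε : ℝ) (hε : 0 < ε) (k : ℕ) :
    ∃ (L : ℕ) (τ : ℕ → S), τ 0 = u 0 ∧ τ L = u k ∧ (∀ i < L, T (τ i) (τ (i + 1))) ∧
      visN M L τ = k ∧
      ∑ i ∈ Finset.range L, c (τ i) ≤
        ∑ i ∈ Finset.range k, ((Dred T c M (u i) (u (i + 1))).toReal + ε) := by
  classical
  induction k with
  | zero => exact ⟨0, u, by simp [visN]⟩
  | succ k ih =>
    obtain ⟨L, τ, h0, h1, h2, h3, h4⟩ := ih
    have hlt : Dred T c M (u k) (u (k + 1)) <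
        Dred T c M (u k) (u (k + 1)) + ENNReal.ofReal ε :=
      ENNReal.lt_add_right (hD k) (by simpa using hε)
    obtain ⟨x, ⟨n, v, hv0, hv1, hvT, hvM, rfl⟩, hx⟩ := sInf_lt_iff.1 hlt
    have hx' : ∑ j ∈ Finset.range (n + 1), c (v j) ≤
        (Dred T c M (u k) (u (k + 1))).toReal + ε := by
      rw [← ENNReal.ofReal_sum_of_nonneg (fun _ _ => hc _)] at hx
      have h := ENNReal.toReal_mono (ENNReal.add_ne_top.2 ⟨hD k, ENNReal.ofReal_ne_top⟩) hx.le
      rwa [ENNReal.toReal_ofReal (Finset.sum_nonneg fun _ _ => hc _),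
        ENNReal.toReal_add (hD k) ENNReal.ofReal_ne_top, ENNReal.toReal_ofReal hε.le] at h
    set w : ℕ → S := fun i => if i < L then τ i else v (i - L) with hw
    have w1 : ∀ i, i < L → w i = τ i := fun i hi => if_pos hi
    have w2 : ∀ i, w (L + i) = v i := fun i => by simp [hw]
    have w1' : ∀ i, i ≤ L → w i = τ i := fun i hi => by
      rcases hi.lt_or_eq with h | rfl
      · exact w1 i h
      · rw [h1, ← hv0]; exact w2 0
    refine ⟨L + (n + 1), w, ?_, ?_, ?_, ?_, ?_⟩
    · rw [w1' 0 (Nat.zero_le _), h0]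
    · rw [w2, hv1]
    · intro i hi
      rcases lt_or_ge i L with h | h
      · rw [w1' i h.le, w1' (i + 1) h]; exact h2 i h
      · obtain ⟨d, rfl⟩ := Nat.exists_eq_add_of_le h
        rw [add_assoc, w2, w2]; exact hvT d (by omega)
    · unfold visN at h3 ⊢
      rw [Finset.sum_range_add]
      congr 1
      · rw [← h3]
        exact Finset.sum_congr rfl fun i hi => by rw [w1 i (Finset.mem_range.1 hi)]
      · rw [Finset.sum_range_succ', Finset.sum_eq_zero]
        · rw [w2, hv0]; simp [hu k]
        · intro j hj
          have := Finset.mem_range.1 hj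
          rw [w2, if_neg (hvM _ (by omega) (by omega))]
    · rw [Finset.sum_range_add, Finset.sum_range_succ _ k]
      refine add_le_add (le_trans (le_of_eq ?_) h4) (le_trans (le_of_eq ?_) hx')
      · exact Finset.sum_congr rfl fun i hi => by rw [w1 i (Finset.mem_range.1 hi)]
      · exact Finset.sum_congr rfl fun i hi => by rw [w2]

/-- In a strongly connected graph, the minimum per-surveillance-cycle
ratio over cycles visiting `M` equals the minimum mean `D`-weight over cyclic
sequences of states of `M` with finite pairwise `D`-values. -/
theorem stmt_11 {S : Type*} [Fintype S] [Nonempty S] (T : S → S → Prop)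
    (hconn : ∀ s s' : S, ∃ (n : ℕ) (σ : ℕ → S), σ 0 = s ∧ σ n = s' ∧
      ∀ i < n, T (σ i) (σ (i + 1)))
    (c : S → ℝ) (hc : ∀ s, 0 ≤ c s) (M : Set S) (hM : M.Nonempty) :
    sInf {γ : ℝ | ∃ (m : ℕ) (σ : ℕ → S), IsCycle T m σ ∧ (∃ i ≤ m, σ i ∈ M) ∧
        γ = psRatio c M m σ} =
    sInf {γ : ℝ | ∃ (m : ℕ) (u : ℕ → S), (∀ i ≤ m, u i ∈ M) ∧
        (∀ i ≤ m, Dred T c M (u i) (u ((i + 1) % (m + 1))) ≠ ⊤) ∧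
        γ = (∑ i ∈ Finset.range (m + 1),
          (Dred T c M (u i) (u ((i + 1) % (m + 1)))).toReal) / (m + 1)} := by
  classical
  set A := {γ : ℝ | ∃ (m : ℕ) (σ : ℕ → S), IsCycle T m σ ∧ (∃ i ≤ m, σ i ∈ M) ∧
        γ = psRatio c M m σ} with hA
  set B := {γ : ℝ | ∃ (m : ℕ) (u : ℕ → S), (∀ i ≤ m, u i ∈ M) ∧
        (∀ i ≤ m, Dred T c M (u i) (u ((i + 1) % (m + 1))) ≠ ⊤) ∧
        γ = (∑ i ∈ Finset.range (m + 1),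
          (Dred T c M (u i) (u ((i + 1) % (m + 1)))).toReal) / (m + 1)} with hB
  have H1 : ∀ a ∈ A, ∃ b ∈ B, b ≤ a := by
    rintro a ⟨m, σ, ⟨hs, hl⟩, ⟨i0, hi0, hi0M⟩, rfl⟩
    have hg : ∀ i, T (σ (i % (m + 1))) (σ ((i + 1) % (m + 1))) := by
      intro i
      have hlt : i % (m + 1) < m + 1 := Nat.mod_lt _ (by omega)
      rcases Nat.lt_or_ge (i % (m + 1)) m with h | h
      · have : (i + 1) % (m + 1) = i % (m + 1) + 1 := by
          rw [← Nat.mod_add_mod, Nat.mod_eq_of_lt (by omega)]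
        rw [this]; exact hs _ h
      · have h' : i % (m + 1) = m := by omega
        have : (i + 1) % (m + 1) = 0 := by
          rw [← Nat.mod_add_mod, h', Nat.mod_self]
        rw [this, h']; exact hl
    set τ : ℕ → S := fun j => σ ((i0 + j) % (m + 1)) with hτ
    have ht0 : τ 0 = σ i0 := by
      simp [hτ, Nat.mod_eq_of_lt (Nat.lt_succ_of_le hi0)]
    have htL : τ (m + 1) = σ i0 := by
      simp [hτ, Nat.mod_eq_of_lt (Nat.lt_succ_of_le hi0)]
    have hsum : ∀ {α : Type} [AddCommMonoid α] (f : S → α),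
        ∑ j ∈ Finset.range (m + 1), f (τ j) = ∑ j ∈ Finset.range (m + 1), f (σ j) := by
      intro α _ f
      refine (sum_rot (fun i => f (σ (i % (m + 1)))) (m + 1) (by simp) i0).trans ?_
      exact Finset.sum_congr rfl fun j hj => by
        rw [Nat.mod_eq_of_lt (Finset.mem_range.1 hj)]
    obtain ⟨u, hu0, huk, huM, hus⟩ := exists_u T c M τ (fun i => hg _) (by rwa [ht0]) (m + 1)
      (by rwa [htL])
    have hcount : visN M (m + 1) τ = visN M (m + 1) σ := hsum (fun s => if s ∈ M then 1 else 0)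
    have hpos : 0 < visN M (m + 1) σ := by
      refine Nat.lt_of_lt_of_le Nat.one_pos ?_
      have := Finset.single_le_sum (f := fun i => if σ i ∈ M then 1 else 0)
        (fun _ _ => Nat.zero_le _) (Finset.mem_range.2 (Nat.lt_succ_of_le hi0))
      simpa [hi0M, visN] using this
    rw [hcount] at huk hus
    rw [hsum (fun s => ENNReal.ofReal (c s)),
      ← ENNReal.ofReal_sum_of_nonneg (fun _ _ => hc _)] at hus
    obtain ⟨k, hk⟩ : ∃ k, visN M (m + 1) σ = k + 1 := ⟨visN M (m + 1) σ - 1, by omega⟩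
    rw [hk] at huk hus
    have hmod : ∀ i ≤ k, u ((i + 1) % (k + 1)) = u (i + 1) := by
      intro i hi
      rcases hi.lt_or_eq with h | rfl
      · rw [Nat.mod_eq_of_lt (by omega)]
      · rw [Nat.mod_self, huk, hu0, ht0, htL]
    have hne : ∑ i ∈ Finset.range (k + 1), Dred T c M (u i) (u (i + 1)) ≠ ⊤ :=
      ne_top_of_le_ne_top ENNReal.ofReal_ne_top hus
    have hne' : ∀ i ∈ Finset.range (k + 1), Dred T c M (u i) (u (i + 1)) ≠ ⊤ := fun i hi =>
      (ENNReal.sum_ne_top.1 hne) i hi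
    refine ⟨_, ⟨k, u, fun i _ => huM i, ?_, rfl⟩, ?_⟩
    · intro i hi
      rw [hmod i hi]; exact hne' i (Finset.mem_range.2 (by omega))
    · unfold psRatio
      rw [visN_eq_ncard, hk]
      push_cast
      gcongr ?_ / _
      have h := ENNReal.toReal_mono ENNReal.ofReal_ne_top hus
      rw [ENNReal.toReal_ofReal (Finset.sum_nonneg fun _ _ => hc _),
        ENNReal.toReal_sum hne'] at h
      refine le_trans (le_of_eq ?_) h
      exact Finset.sum_congr rfl fun i hi => by
        rw [hmod i (Nat.le_of_lt_succ (Finset.mem_range.1 hi))]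
  have H2 : ∀ b ∈ B, ∀ ε > 0, ∃ a ∈ A, a ≤ b + ε := by
    rintro b ⟨m, u, huM, hD, rfl⟩ ε hε
    have hle : ∀ i, i % (m + 1) ≤ m := fun i => Nat.le_of_lt_succ (Nat.mod_lt _ (by omega))
    obtain ⟨L, τ, h0, h1, h2, h3, h4⟩ := exists_walk T c hc M (fun i => u (i % (m + 1)))
      (fun i => huM _ (hle i)) (fun i => by
        have := hD _ (hle i)
        rwa [Nat.mod_add_mod] at this) ε hε (m + 1)
    simp only [Nat.zero_mod, Nat.mod_self] at h0 h1
    cases L with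
    | zero => simp [visN] at h3
    | succ L =>
    refine ⟨_, ⟨L, τ, ⟨fun i hi => h2 i (by omega), ?_⟩, ⟨0, Nat.zero_le _, ?_⟩, rfl⟩, ?_⟩
    · have := h2 L (by omega)
      rwa [h1, ← h0] at this
    · rw [h0]; exact huM 0 (Nat.zero_le _)
    · unfold psRatio
      rw [visN_eq_ncard, h3]
      have hm : (0 : ℝ) < m + 1 := by positivity
      push_cast
      rw [div_le_iff₀ hm, add_mul, div_mul_cancel₀ _ hm.ne']
      refine h4.trans (le_of_eq ?_)
      rw [Finset.sum_add_distrib]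
      congr 1
      · exact Finset.sum_congr rfl fun i hi => by
          rw [Nat.mod_eq_of_lt (Finset.mem_range.1 hi)]
      · simp [mul_comm]
  have hAb : BddBelow A := by
    refine ⟨0, ?_⟩
    rintro a ⟨m, σ, -, -, rfl⟩
    exact div_nonneg (Finset.sum_nonneg fun _ _ => hc _) (Nat.cast_nonneg _)
  have hBb : BddBelow B := by
    refine ⟨0, ?_⟩
    rintro a ⟨m, σ, -, -, rfl⟩
    exact div_nonneg (Finset.sum_nonneg fun _ _ => ENNReal.toReal_nonneg) (by positivity)
  rcases A.eq_empty_or_nonempty with hAe | hAn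
  · have hBe : B = ∅ := by
      by_contra h
      obtain ⟨b, hb⟩ := Set.nonempty_iff_ne_empty.2 h
      obtain ⟨a, ha, -⟩ := H2 b hb 1 one_pos
      rw [hAe] at ha; exact ha
    rw [hAe, hBe]
  · have hBn : B.Nonempty := by
      obtain ⟨a, ha⟩ := hAn
      obtain ⟨b, hb, -⟩ := H1 a ha
      exact ⟨b, hb⟩
    apply le_antisymm
    · refine le_csInf hBn fun b hb => le_of_forall_pos_le_add fun ε hε => ?_
      obtain ⟨a, ha, hab⟩ := H2 b hb ε hε
      exact (csInf_le hAb ha).trans hab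
    · refine le_csInf hAn fun a ha => ?_
      obtain ⟨b, hb, hba⟩ := H1 a ha
      exact (csInf_le hBb hb).trans hba
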